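/- Let (α1, α2, α3) be a morphism of monoid extensions from (k : K → X, f : X → M) to (k' : K' → X', f' : X' → M'), and let m ∈ M. If α2(u) ∈ B'_{α3(m)} for some u ∈ B_m, then α2(v) ∈ B'_{α3(m)} for every v ∈ B_m. -/

import Mathlib

/-- A monoid extension: `K`, `X` additive monoids (not assumed commutative),
`M` a multiplicative monoid, `k : K → X` an injective monoid homomorphism whose image
is `{x | f x = 1}`, and `f : X → M` a surjective monoid homomorphism. -/
structure MonoidExtension {K X M : Type*} [AddMonoid K] [AddMonoid X] [Monoid M]
    (k : K → X) (f : X → M) : Prop where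
  k_add : ∀ a b : K, k (a + b) = k a + k b
  k_zero : k 0 = 0
  k_inj : Function.Injective k
  ker_eq : ∀ x : X, f x = 1 ↔ x ∈ Set.range k
  f_add : ∀ x y : X, f (x + y) = f x * f y
  f_zero : f 0 = 1
  f_surj : Function.Surjective f

/-- The set `B_m` of representatives of `m`. -/
def Reps {K X M : Type*} [AddMonoid K] [AddMonoid X] [Monoid M]
    (k : K → X) (f : X → M) (m : M) : Set X :=
  {u | f u = m ∧ ∀ x : X, f x = m → ∃! a : K, x = k a + u}

/-- A monoid extension is a Schreier extension if every `m` has a representative. -/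
def IsSchreier {K X M : Type*} [AddMonoid K] [AddMonoid X] [Monoid M]
    (k : K → X) (f : X → M) : Prop :=
  ∀ m : M, (Reps k f m).Nonempty

/-! Any two representatives of `m` differ by a unit of `K`: writing `v = k a + u` and
`u = k b + v`, uniqueness of coefficients forces `a + b = b + a = 0`. Conversely, right translation
by a unit of `K` permutes the coefficients, so translating a representative by a unit inside its
fibre gives a representative. A morphism carries units of `K` to units of `K'`, so it transports
this relation. -/

section Representatives

variable {K X M : Type*} [AddMonoid K] [AddMonoid X] [Monoid M] {k : K → X} {f : X → M}
  {m : M} {u v : X}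

theorem add_eq_self_iff_of_mem_reps (hk_zero : k 0 = 0) (hu : u ∈ Reps k f m) {a : K} :
    k a + u = u ↔ a = 0 := by
  have zero_add_u : k 0 + u = u := by rw [hk_zero, zero_add]
  constructor
  · intro ha
    exact (hu.2 u hu.1).unique ha.symm zero_add_u.symm
  · rintro rfl
    exact zero_add_u

theorem exists_addUnit_add_eq_of_mem_reps (hk_zero : k 0 = 0)
    (hk_add : ∀ a b : K, k (a + b) = k a + k b)
    (hu : u ∈ Reps k f m) (hv : v ∈ Reps k f m) : ∃ a : AddUnits K, k a + u = v := by
  obtain ⟨a, hva : v = k a + u, -⟩ := hu.2 v hv.1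
  obtain ⟨b, hub : u = k b + v, -⟩ := hv.2 u hu.1
  have hab : a + b = 0 := by
    rw [← add_eq_self_iff_of_mem_reps hk_zero hv, hk_add, add_assoc, ← hub, ← hva]
  have hba : b + a = 0 := by
    rw [← add_eq_self_iff_of_mem_reps hk_zero hu, hk_add, add_assoc, ← hva, ← hub]
  exact ⟨⟨a, b, hab, hba⟩, hva.symm⟩

theorem addUnit_add_mem_reps (hk_add : ∀ a b : K, k (a + b) = k a + k b) (hu : u ∈ Reps k f m)
    (a : AddUnits K) (hf : f (k a + u) = m) : k a + u ∈ Reps k f m := by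
  refine ⟨hf, fun x hx => ?_⟩
  have coeff_iff (c : K) : x = k c + (k a + u) ↔ x = k (a.addRight c) + u := by
    rw [AddUnits.addRight_apply, hk_add, add_assoc]
  exact (a.addRight.existsUnique_congr coeff_iff).mpr (hu.2 x hx)

end Representatives

theorem morphism_preserves_reps_general {K X M K' X' M' : Type*}
    [AddMonoid K] [AddMonoid X] [Monoid M] [AddMonoid K'] [AddMonoid X'] [Monoid M']
    {k : K → X} {f : X → M} {k' : K' → X'} {f' : X' → M'}
    (hk_zero : k 0 = 0) (hk_add : ∀ a b : K, k (a + b) = k a + k b)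
    (hk'_add : ∀ a b : K', k' (a + b) = k' a + k' b)
    (α1 : K →+ K') (α2 : X → X') (α3 : M → M')
    (hα2 : ∀ (a : K) (x : X), α2 (k a + x) = k' (α1 a) + α2 x)
    (hsq2 : ∀ x : X, f' (α2 x) = α3 (f x))
    {m : M} {u v : X} (hu : u ∈ Reps k f m) (hαu : α2 u ∈ Reps k' f' (α3 m))
    (hv : v ∈ Reps k f m) : α2 v ∈ Reps k' f' (α3 m) := by
  obtain ⟨a, rfl⟩ := exists_addUnit_add_eq_of_mem_reps hk_zero hk_add hu hv
  have fibre : f' (k' (α1 a) + α2 u) = α3 m := by rw [← hα2, hsq2, hv.1]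
  rw [hα2]
  exact addUnit_add_mem_reps hk'_add hαu (AddUnits.map α1 a) fibre

/-- Proposition 2.8 (prop:rep_pres): given a morphism `(α1, α2, α3)` of monoid extensions
and `m ∈ M`, if `α2 u ∈ B'_{α3 m}` for some `u ∈ B_m`, then `α2 v ∈ B'_{α3 m}` for
every `v ∈ B_m`. -/
theorem morphism_preserves_reps {K X M K' X' M' : Type*}
    [AddMonoid K] [AddMonoid X] [Monoid M] [AddMonoid K'] [AddMonoid X'] [Monoid M']
    (k : K → X) (f : X → M) (k' : K' → X') (f' : X' → M')
    (hE : MonoidExtension k f) (hE' : MonoidExtension k' f')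
    (α1 : K → K') (α2 : X → X') (α3 : M → M')
    (hα1_add : ∀ a b : K, α1 (a + b) = α1 a + α1 b) (hα1_zero : α1 0 = 0)
    (hα2_add : ∀ x y : X, α2 (x + y) = α2 x + α2 y) (hα2_zero : α2 0 = 0)
    (hα3_mul : ∀ m n : M, α3 (m * n) = α3 m * α3 n) (hα3_one : α3 1 = 1)
    (hsq1 : ∀ a : K, α2 (k a) = k' (α1 a))
    (hsq2 : ∀ x : X, f' (α2 x) = α3 (f x))
    (m : M) (u : X) (hu : u ∈ Reps k f m) (hαu : α2 u ∈ Reps k' f' (α3 m)) :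
    ∀ v ∈ Reps k f m, α2 v ∈ Reps k' f' (α3 m) := by
  exact fun _ => morphism_preserves_reps_general hE.k_zero hE.k_add hE'.k_add
    ⟨⟨α1, hα1_zero⟩, hα1_add⟩ α2 α3 (fun a x => by rw [hα2_add, hsq1]; rfl) hsq2 hu hαu
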